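/- (Theorem 4, convergence.) If in addition the regressor Φ is bounded on [0,∞), then along any solution of the high-order-tuner error model the tracking error converges to zero: lim_{t→∞} e(t) = 0. -/

import Mathlib

open Matrix MeasureTheory Filter

/-!
With `X = Ξ - Θ` and `D = Θ̂ - Ξ`, take the Lyapunov function
`V = eᵀPe + γ⁻¹ (tr XᵀΛX + tr DᵀΛD)`. In its derivative the terms in `X` cancel, and the only
indefinite term left, `4 (BᵀPe)ᵀΛDΦ`, is absorbed by half of `eᵀQe` and by the normalised damping
`2 (β/γ) μ |Φ|² tr DᵀΛD`; hence `V' ≤ -|e|²`. So `V` is bounded, and `eᵀPe ≤ (tr P) |e|²` is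
integrable on `[0, ∞)`. When `Φ` is bounded, `eᵀPe` has a bounded derivative, and Barbalat's lemma
gives `eᵀPe → 0`.
-/

lemma two_mul_abs_le_add_of_sq_le_mul {x a b : ℝ} (ha : 0 ≤ a) (hb : 0 ≤ b) (hx : x ^ 2 ≤ a * b) :
    2 * |x| ≤ a + b := by
  rw [← abs_two, ← abs_mul]
  exact abs_le_of_sq_le_sq (by linarith [sq_nonneg (a - b)]) (add_nonneg ha hb)

section QuadraticForms

variable {ι κ ν : Type*} [Fintype ι] [Fintype κ] [Fintype ν]

lemma mulVec_dotProduct_mulVec_le (A : Matrix ι κ ℝ) (v : κ → ℝ) :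
    (A *ᵥ v) ⬝ᵥ (A *ᵥ v) ≤ (∑ i, ∑ j, A i j ^ 2) * (v ⬝ᵥ v) := by
  simp only [dotProduct, mulVec, ← sq]
  rw [Finset.sum_mul]
  exact Finset.sum_le_sum fun i _ => Finset.sum_mul_sq_le_sq_mul_sq Finset.univ (A i) v

open scoped MatrixOrder in
lemma dotProduct_mulVec_le_trace_mul_of_posSemidef {S : Matrix ι ι ℝ} (hS : S.PosSemidef)
    (v : ι → ℝ) : v ⬝ᵥ S *ᵥ v ≤ S.trace * (v ⬝ᵥ v) := by
  classical
  obtain ⟨M, rfl⟩ := CStarAlgebra.nonneg_iff_eq_star_mul_self.mp hS.nonneg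
  have trace_eq : (star M * M).trace = ∑ i, ∑ j, M i j ^ 2 := by
    rw [Finset.sum_comm]
    simp [trace, mul_apply, star_eq_conjTranspose, sq]
  have form_eq : v ⬝ᵥ (star M * M) *ᵥ v = (M *ᵥ v) ⬝ᵥ (M *ᵥ v) := by
    rw [star_eq_conjTranspose, conjTranspose_eq_transpose_of_trivial, ← mulVec_mulVec,
      dotProduct_mulVec, vecMul_transpose]
  rw [trace_eq, form_eq]
  exact mulVec_dotProduct_mulVec_le M v

lemma dotProduct_mulVec_comm_of_isSymm {S : Matrix ι ι ℝ} (hS : S.IsSymm) (x y : ι → ℝ) :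
    x ⬝ᵥ S *ᵥ y = y ⬝ᵥ S *ᵥ x := by
  rw [dotProduct_mulVec, ← mulVec_transpose, hS.eq, dotProduct_comm]

lemma dotProduct_mulVec_sq_le_of_posSemidef {S : Matrix ι ι ℝ} (hS : S.PosSemidef)
    (x y : ι → ℝ) : (x ⬝ᵥ S *ᵥ y) ^ 2 ≤ (x ⬝ᵥ S *ᵥ x) * (y ⬝ᵥ S *ᵥ y) := by
  classical
  have form_nonneg : ∀ z, 0 ≤ toBilin' S z z := fun z => by
    simpa [toBilin'_apply'] using hS.dotProduct_mulVec_nonneg z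
  have form_symm : LinearMap.IsSymm (toBilin' S) := ⟨fun a b => by
    simpa [toBilin'_apply'] using
      dotProduct_mulVec_comm_of_isSymm (isHermitian_iff_isSymm.1 hS.isHermitian) a b⟩
  simpa [toBilin'_apply'] using
    LinearMap.BilinForm.apply_sq_le_of_symm (toBilin' S) form_nonneg form_symm x y

lemma dotProduct_self_le_trace_inv_mul_of_posDef [DecidableEq ι] {P : Matrix ι ι ℝ}
    (hP : P.PosDef) (x : ι → ℝ) : x ⬝ᵥ x ≤ P⁻¹.trace * (x ⬝ᵥ P *ᵥ x) := by
  have P_mul_inv : P *ᵥ (P⁻¹ *ᵥ x) = x := by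
    rw [mulVec_mulVec, mul_nonsing_inv _ ((isUnit_iff_isUnit_det P).1 hP.isUnit), one_mulVec]
  have cauchy_schwarz : (x ⬝ᵥ x) ^ 2 ≤ (x ⬝ᵥ P *ᵥ x) * (x ⬝ᵥ P⁻¹ *ᵥ x) := by
    have h := dotProduct_mulVec_sq_le_of_posSemidef hP.posSemidef x (P⁻¹ *ᵥ x)
    rwa [P_mul_inv, dotProduct_comm (P⁻¹ *ᵥ x) x] at h
  have inv_le := dotProduct_mulVec_le_trace_mul_of_posSemidef hP.inv.posSemidef x
  have form_nonneg : 0 ≤ x ⬝ᵥ P *ᵥ x := hP.posSemidef.dotProduct_mulVec_nonneg x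
  rcases (show 0 ≤ x ⬝ᵥ x from dotProduct_star_self_nonneg x).eq_or_lt with hx | hx
  · rw [← hx]
    exact mul_nonneg hP.inv.posSemidef.trace_nonneg form_nonneg
  · refine le_of_mul_le_mul_right ?_ hx
    calc (x ⬝ᵥ x) * (x ⬝ᵥ x) = (x ⬝ᵥ x) ^ 2 := (sq _).symm
      _ ≤ (x ⬝ᵥ P *ᵥ x) * (P⁻¹.trace * (x ⬝ᵥ x)) :=
        cauchy_schwarz.trans (mul_le_mul_of_nonneg_left inv_le form_nonneg)
      _ = P⁻¹.trace * (x ⬝ᵥ P *ᵥ x) * (x ⬝ᵥ x) := by ring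

lemma mul_dotProduct_self_le_of_posSemidef_sub_smul_one [DecidableEq ι] {Q : Matrix ι ι ℝ}
    {c : ℝ} (hQ : (Q - c • 1).PosSemidef) (x : ι → ℝ) : c * (x ⬝ᵥ x) ≤ x ⬝ᵥ Q *ᵥ x := by
  simpa [sub_mulVec, smul_mulVec, dotProduct_sub] using hQ.dotProduct_mulVec_nonneg x

lemma dotProduct_mulVec_self_le_of_norm_toEuclideanCLM_le [DecidableEq ι] {S : Matrix ι ι ℝ}
    {c : ℝ} (hS : ‖toEuclideanCLM (𝕜 := ℝ) S‖ ≤ c) (u : ι → ℝ) : u ⬝ᵥ S *ᵥ u ≤ c * (u ⬝ᵥ u) := by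
  have inner_eq : ∀ v w : ι → ℝ, inner ℝ (WithLp.toLp 2 v) (WithLp.toLp 2 w) = v ⬝ᵥ w :=
    fun v w => by simp [EuclideanSpace.inner_toLp_toLp, dotProduct_comm]
  calc u ⬝ᵥ S *ᵥ u = inner ℝ (WithLp.toLp 2 u) (toEuclideanCLM (𝕜 := ℝ) S (WithLp.toLp 2 u)) := by
        rw [toEuclideanCLM_toLp, inner_eq]
    _ ≤ ‖WithLp.toLp 2 u‖ * ‖toEuclideanCLM (𝕜 := ℝ) S (WithLp.toLp 2 u)‖ :=
        real_inner_le_norm _ _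
    _ ≤ ‖WithLp.toLp 2 u‖ * (c * ‖WithLp.toLp 2 u‖) := by
        gcongr
        exact ContinuousLinearMap.le_of_opNorm_le _ hS _
    _ = c * (u ⬝ᵥ u) := by
        rw [← inner_eq, real_inner_self_eq_norm_mul_norm]
        ring

lemma trace_transpose_mul_mul_nonneg {S : Matrix κ κ ℝ} (hS : S.PosSemidef) (X : Matrix κ ν ℝ) :
    0 ≤ (Xᵀ * S * X).trace := by
  simpa using (hS.conjTranspose_mul_mul_same X).trace_nonneg

lemma dotProduct_mulVec_mulVec_sq_le {S : Matrix κ κ ℝ} (hS : S.PosSemidef)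
    (b : κ → ℝ) (X : Matrix κ ν ℝ) (v : ν → ℝ) :
    (b ⬝ᵥ S *ᵥ (X *ᵥ v)) ^ 2 ≤ (b ⬝ᵥ S *ᵥ b) * ((Xᵀ * S * X).trace * (v ⬝ᵥ v)) := by
  have form_le : (X *ᵥ v) ⬝ᵥ S *ᵥ (X *ᵥ v) ≤ (Xᵀ * S * X).trace * (v ⬝ᵥ v) := by
    have h := dotProduct_mulVec_le_trace_mul_of_posSemidef (hS.conjTranspose_mul_mul_same X) v
    rwa [conjTranspose_eq_transpose_of_trivial, ← mulVec_mulVec, ← mulVec_mulVec,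
      dotProduct_mulVec v, vecMul_transpose] at h
  have b_nonneg : 0 ≤ b ⬝ᵥ S *ᵥ b := hS.dotProduct_mulVec_nonneg b
  exact (dotProduct_mulVec_sq_le_of_posSemidef hS b _).trans
    (mul_le_mul_of_nonneg_left form_le b_nonneg)

lemma two_mul_abs_dotProduct_mulVec_mulVec_le {S : Matrix κ κ ℝ} (hS : S.PosSemidef)
    (b : κ → ℝ) (X : Matrix κ ν ℝ) (v : ν → ℝ) :
    2 * |b ⬝ᵥ S *ᵥ (X *ᵥ v)| ≤ b ⬝ᵥ S *ᵥ b + (Xᵀ * S * X).trace * (v ⬝ᵥ v) :=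
  two_mul_abs_le_add_of_sq_le_mul (hS.dotProduct_mulVec_nonneg b)
    (mul_nonneg (trace_transpose_mul_mul_nonneg hS X) (dotProduct_star_self_nonneg v))
    (dotProduct_mulVec_mulVec_sq_le hS b X v)

lemma trace_transpose_mul_mul_eq_sum (S : Matrix κ κ ℝ) (X Y : Matrix κ ν ℝ) :
    (Xᵀ * S * Y).trace = ∑ j, X.col j ⬝ᵥ S *ᵥ Y.col j := by
  simp [trace, Matrix.mul_assoc, mul_apply, dotProduct, mulVec]

lemma trace_transpose_mul_mul_vecMulVec {S : Matrix κ κ ℝ} (hS : S.IsSymm)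
    (X : Matrix κ ν ℝ) (b : κ → ℝ) (v : ν → ℝ) :
    (Xᵀ * S * vecMulVec b v).trace = b ⬝ᵥ S *ᵥ (X *ᵥ v) := by
  rw [mul_vecMulVec, trace_vecMulVec, ← mulVec_mulVec, mulVec_transpose, ← dotProduct_mulVec,
    dotProduct_comm, dotProduct_mulVec_comm_of_isSymm hS, dotProduct_comm]

end QuadraticForms

lemma hasDerivAt_dotProduct_mulVec_self {ι : Type*} [Fintype ι] {S : Matrix ι ι ℝ} (hS : S.IsSymm)
    {x : ℝ → ι → ℝ} {x' : ι → ℝ} {t : ℝ} (hx : HasDerivAt x x' t) :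
    HasDerivAt (fun s => x s ⬝ᵥ S *ᵥ x s) (2 * (x t ⬝ᵥ S *ᵥ x')) t := by
  have hx_coord := hasDerivAt_pi.1 hx
  have hSx : ∀ i, HasDerivAt (fun s => (S *ᵥ x s) i) ((S *ᵥ x') i) t := fun i =>
    HasDerivAt.fun_sum fun j _ => (hx_coord j).const_mul _
  refine (HasDerivAt.fun_sum fun i _ => (hx_coord i).mul (hSx i)).congr_deriv ?_
  rw [Finset.sum_add_distrib, two_mul]
  exact congrArg (· + _) (dotProduct_mulVec_comm_of_isSymm hS x' (x t))

lemma hasDerivAt_trace_transpose_mul_mul {κ ν : Type*} [Fintype κ] [Fintype ν] {S : Matrix κ κ ℝ}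
    (hS : S.IsSymm) {X : ℝ → Matrix κ ν ℝ} {X' : Matrix κ ν ℝ} {t : ℝ}
    (hX : ∀ i j, HasDerivAt (fun s => X s i j) (X' i j) t) :
    HasDerivAt (fun s => ((X s)ᵀ * S * X s).trace) (2 * ((X t)ᵀ * S * X').trace) t := by
  simp only [trace_transpose_mul_mul_eq_sum, Finset.mul_sum]
  exact HasDerivAt.fun_sum fun j _ =>
    hasDerivAt_dotProduct_mulVec_self hS (hasDerivAt_pi.2 fun i => hX i j)

-- A form of Barbalat's lemma: `f²` and its derivative `2 f f'` are both integrable.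
lemma tendsto_zero_of_integrableOn_of_abs_deriv_le {f f' : ℝ → ℝ} {a b L : ℝ}
    (hf : ∀ t ∈ Set.Ici a, HasDerivAt f (f' t) t) (hint : IntegrableOn f (Set.Ioi a))
    (hb : ∀ t ∈ Set.Ici a, |f t| ≤ b) (hL : ∀ t ∈ Set.Ici a, |f' t| ≤ L) :
    Tendsto f atTop (nhds 0) := by
  have on_Ioi : ∀ {p : ℝ → Prop}, (∀ t ∈ Set.Ici a, p t) →
      ∀ᵐ t ∂volume.restrict (Set.Ioi a), p t := fun h =>
    (ae_restrict_mem measurableSet_Ioi).mono fun t ht => h t (Set.Ioi_subset_Ici_self ht)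
  have f'_meas : AEStronglyMeasurable f' (volume.restrict (Set.Ioi a)) :=
    (aestronglyMeasurable_deriv f _).congr (on_Ioi fun t ht => (hf t ht).deriv)
  have sq_int : IntegrableOn (fun t => f t * f t) (Set.Ioi a) :=
    hint.bdd_mul hint.aestronglyMeasurable (on_Ioi hb)
  have deriv_sq_int : IntegrableOn (fun t => f' t * f t + f t * f' t) (Set.Ioi a) :=
    (hint.bdd_mul f'_meas (on_Ioi hL)).add (hint.mul_bdd f'_meas (on_Ioi hL))
  have sq_tendsto : Tendsto (fun t => f t * f t) atTop (nhds 0) :=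
    tendsto_zero_of_hasDerivAt_of_integrableOn_Ioi
      (fun t ht => (hf t (Set.Ioi_subset_Ici_self ht)).mul (hf t (Set.Ioi_subset_Ici_self ht)))
      deriv_sq_int sq_int
  rw [tendsto_zero_iff_abs_tendsto_zero]
  simpa [Function.comp_def, Real.sqrt_mul_self_eq_abs] using sq_tendsto.sqrt

lemma antitoneOn_Ici_of_hasDerivAt_nonpos {V V' : ℝ → ℝ} {a : ℝ}
    (hV : ∀ t ∈ Set.Ici a, HasDerivAt V (V' t) t) (hV' : ∀ t ∈ Set.Ici a, V' t ≤ 0) :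
    AntitoneOn V (Set.Ici a) :=
  antitoneOn_of_hasDerivWithinAt_nonpos (convex_Ici a)
    (fun t ht => (hV t ht).continuousAt.continuousWithinAt)
    (fun t ht => (hV t (interior_subset ht)).hasDerivWithinAt)
    (fun t ht => hV' t (interior_subset ht))

lemma integrableOn_Ioi_of_hasDerivAt_of_nonpos_of_nonneg {V V' : ℝ → ℝ} {a : ℝ}
    (hV : ∀ t ∈ Set.Ici a, HasDerivAt V (V' t) t) (hV' : ∀ t ∈ Set.Ici a, V' t ≤ 0)
    (hV_nonneg : ∀ t ∈ Set.Ici a, 0 ≤ V t) : IntegrableOn V' (Set.Ioi a) := by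
  have V_max_anti : Antitone fun t => V (max t a) := fun s t hst =>
    antitoneOn_Ici_of_hasDerivAt_nonpos hV hV' (le_max_right s a) (le_max_right t a)
      (max_le_max_right a hst)
  have V_max_bdd : BddBelow (Set.range fun t => V (max t a)) :=
    ⟨0, Set.forall_mem_range.2 fun t => hV_nonneg _ (le_max_right t a)⟩
  have V_tendsto : Tendsto V atTop (nhds (⨅ t, V (max t a))) :=
    (tendsto_atTop_ciInf V_max_anti V_max_bdd).congr'
      ((eventually_ge_atTop a).mono fun t ht => congrArg V (max_eq_left ht))
  exact integrableOn_Ioi_deriv_of_nonpos' hV (fun t ht => hV' t (Set.Ioi_subset_Ici_self ht))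
    V_tendsto

section HighOrderTuner

variable {ι κ ν : Type*} [Fintype ι] [Fintype κ] [Fintype ν]

/-- The trajectory `(e, X, D)` solves the high-order-tuner error model on `[0, ∞)` in the deviation
coordinates `X = Ξ - Θ` and `D = Θ̂ - Ξ`. Matrix-valued functions are differentiated entrywise. -/
structure IsHOTErrorSolution (A P : Matrix ι ι ℝ) (B : Matrix ι κ ℝ) (Λ : Matrix κ κ ℝ) (γ β μ : ℝ)
    (φ : ℝ → ν → ℝ) (e : ℝ → ι → ℝ) (X D : ℝ → Matrix κ ν ℝ) : Prop where
  hasDerivAt_error : ∀ t ∈ Set.Ici (0 : ℝ),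
    HasDerivAt e (A *ᵥ e t + (B * Λ * (X t + D t)) *ᵥ φ t) t
  hasDerivAt_deviation : ∀ t ∈ Set.Ici (0 : ℝ), ∀ i j,
    HasDerivAt (fun s => X s i j) ((-γ • vecMulVec ((Bᵀ * P) *ᵥ e t) (φ t)) i j) t
  hasDerivAt_lag : ∀ t ∈ Set.Ici (0 : ℝ), ∀ i j,
    HasDerivAt (fun s => D s i j)
      ((-(β * (1 + μ * (φ t ⬝ᵥ φ t))) • D t + γ • vecMulVec ((Bᵀ * P) *ᵥ e t) (φ t)) i j) t

/-- The Lyapunov function `eᵀPe + γ⁻¹ (tr XᵀΛX + tr DᵀΛD)` of the error model, evaluated at a single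
state. -/
noncomputable def hotLyapunov (P : Matrix ι ι ℝ) (Λ : Matrix κ κ ℝ) (γ : ℝ) (e : ι → ℝ)
    (X D : Matrix κ ν ℝ) : ℝ :=
  e ⬝ᵥ P *ᵥ e + γ⁻¹ * ((Xᵀ * Λ * X).trace + (Dᵀ * Λ * D).trace)

/-- The derivative of the tracking energy `eᵀPe` along the error model. -/
def hotEnergyRate (P Q : Matrix ι ι ℝ) (B : Matrix ι κ ℝ) (Λ : Matrix κ κ ℝ) (φ : ν → ℝ)
    (e : ι → ℝ) (X D : Matrix κ ν ℝ) : ℝ :=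
  -(e ⬝ᵥ Q *ᵥ e) + 2 * (((Bᵀ * P) *ᵥ e) ⬝ᵥ Λ *ᵥ (X *ᵥ φ))
    + 2 * (((Bᵀ * P) *ᵥ e) ⬝ᵥ Λ *ᵥ (D *ᵥ φ))

/-- The derivative of `hotLyapunov` along the error model. It does not involve `X`, because
`Ξ` is updated so that the sign-indefinite terms in `X` cancel. -/
noncomputable def hotLyapunovRate (P Q : Matrix ι ι ℝ) (B : Matrix ι κ ℝ) (Λ : Matrix κ κ ℝ)
    (γ β μ : ℝ) (φ : ν → ℝ) (e : ι → ℝ) (D : Matrix κ ν ℝ) : ℝ :=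
  -(e ⬝ᵥ Q *ᵥ e) + 4 * (((Bᵀ * P) *ᵥ e) ⬝ᵥ Λ *ᵥ (D *ᵥ φ))
    - 2 * (β / γ) * (1 + μ * (φ ⬝ᵥ φ)) * (Dᵀ * Λ * D).trace

lemma hotLyapunov_nonneg {P : Matrix ι ι ℝ} (hP : P.PosSemidef) {Λ : Matrix κ κ ℝ}
    (hΛ : Λ.PosSemidef) {γ : ℝ} (hγ : 0 ≤ γ) (e : ι → ℝ) (X D : Matrix κ ν ℝ) :
    0 ≤ hotLyapunov P Λ γ e X D :=
  add_nonneg (hP.dotProduct_mulVec_nonneg e) (mul_nonneg (inv_nonneg.2 hγ)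
    (add_nonneg (trace_transpose_mul_mul_nonneg hΛ X) (trace_transpose_mul_mul_nonneg hΛ D)))

lemma dotProduct_mulVec_le_hotLyapunov (P : Matrix ι ι ℝ) {Λ : Matrix κ κ ℝ} (hΛ : Λ.PosSemidef)
    {γ : ℝ} (hγ : 0 ≤ γ) (e : ι → ℝ) (X D : Matrix κ ν ℝ) :
    e ⬝ᵥ P *ᵥ e ≤ hotLyapunov P Λ γ e X D :=
  le_add_of_nonneg_right (mul_nonneg (inv_nonneg.2 hγ)
    (add_nonneg (trace_transpose_mul_mul_nonneg hΛ X) (trace_transpose_mul_mul_nonneg hΛ D)))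

lemma trace_add_trace_le_mul_hotLyapunov {P : Matrix ι ι ℝ} (hP : P.PosSemidef) (Λ : Matrix κ κ ℝ)
    {γ : ℝ} (hγ : 0 < γ) (e : ι → ℝ) (X D : Matrix κ ν ℝ) :
    (Xᵀ * Λ * X).trace + (Dᵀ * Λ * D).trace ≤ γ * hotLyapunov P Λ γ e X D :=
  (inv_mul_le_iff₀ hγ).1 (le_add_of_nonneg_left (hP.dotProduct_mulVec_nonneg e))

lemma dotProduct_mulVec_transpose_mul_mulVec_le [DecidableEq κ] {P : Matrix ι ι ℝ} (hP : P.IsSymm)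
    (B : Matrix ι κ ℝ) {Λ : Matrix κ κ ℝ} (hΛ : ‖toEuclideanCLM (𝕜 := ℝ) Λ‖ ≤ 1) (e : ι → ℝ) :
    ((Bᵀ * P) *ᵥ e) ⬝ᵥ Λ *ᵥ ((Bᵀ * P) *ᵥ e) ≤ (∑ i, ∑ j, (P * B) i j ^ 2) * (e ⬝ᵥ e) := by
  have frobenius_eq : ∑ i, ∑ j, (Bᵀ * P) i j ^ 2 = ∑ i, ∑ j, (P * B) i j ^ 2 := by
    rw [Finset.sum_comm, show Bᵀ * P = (P * B)ᵀ by rw [transpose_mul, hP.eq]]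
    simp only [transpose_apply]
  calc ((Bᵀ * P) *ᵥ e) ⬝ᵥ Λ *ᵥ ((Bᵀ * P) *ᵥ e)
      ≤ 1 * (((Bᵀ * P) *ᵥ e) ⬝ᵥ ((Bᵀ * P) *ᵥ e)) :=
        dotProduct_mulVec_self_le_of_norm_toEuclideanCLM_le hΛ _
    _ ≤ (∑ i, ∑ j, (P * B) i j ^ 2) * (e ⬝ᵥ e) := by
        rw [one_mul, ← frobenius_eq]
        exact mulVec_dotProduct_mulVec_le _ e

lemma hotLyapunovRate_le [DecidableEq ι] [DecidableEq κ] {P Q : Matrix ι ι ℝ} (hP : P.IsSymm)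
    (hQ : (Q - (2 : ℝ) • 1).PosSemidef) (B : Matrix ι κ ℝ) {Λ : Matrix κ κ ℝ} (hΛ : Λ.PosSemidef)
    (hΛnorm : ‖toEuclideanCLM (𝕜 := ℝ) Λ‖ ≤ 1) {γ β μ : ℝ} (hγ : 0 < γ) (hβ : 0 < β)
    (hμ : 2 * γ / β * ∑ i, ∑ j, (P * B) i j ^ 2 ≤ μ) (φ : ν → ℝ) (e : ι → ℝ) (D : Matrix κ ν ℝ) :
    hotLyapunovRate P Q B Λ γ β μ φ e D ≤ -(e ⬝ᵥ e) := by
  set k := ∑ i, ∑ j, (P * B) i j ^ 2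
  set b := (Bᵀ * P) *ᵥ e
  set d := (Dᵀ * Λ * D).trace with d_def
  have e_nonneg : 0 ≤ e ⬝ᵥ e := dotProduct_star_self_nonneg e
  have d_nonneg : 0 ≤ d := trace_transpose_mul_mul_nonneg hΛ D
  have φ_nonneg : 0 ≤ φ ⬝ᵥ φ := dotProduct_star_self_nonneg φ
  have Q_lower : 2 * (e ⬝ᵥ e) ≤ e ⬝ᵥ Q *ᵥ e :=
    mul_dotProduct_self_le_of_posSemidef_sub_smul_one hQ e
  have cross_sq : (b ⬝ᵥ Λ *ᵥ (D *ᵥ φ)) ^ 2 ≤ k * (e ⬝ᵥ e) * (d * (φ ⬝ᵥ φ)) :=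
    (dotProduct_mulVec_mulVec_sq_le hΛ b D φ).trans
      (mul_le_mul_of_nonneg_right (dotProduct_mulVec_transpose_mul_mulVec_le hP B hΛnorm e)
        (by positivity))
  have cross_le : 4 * (b ⬝ᵥ Λ *ᵥ (D *ᵥ φ)) ≤ e ⬝ᵥ e + 4 * k * (d * (φ ⬝ᵥ φ)) := by
    have h := two_mul_abs_le_add_of_sq_le_mul (a := e ⬝ᵥ e / 2) (b := 2 * k * (d * (φ ⬝ᵥ φ)))
      (by positivity) (by positivity) (cross_sq.trans_eq (by ring))
    linarith [le_abs_self (b ⬝ᵥ Λ *ᵥ (D *ᵥ φ))]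
  have gain_le : 4 * k ≤ 2 * (β / γ) * μ := by
    calc 4 * k = 2 * (β / γ) * (2 * γ / β * k) := by field_simp; ring
      _ ≤ 2 * (β / γ) * μ := by gcongr
  have damping_le : 4 * k * (d * (φ ⬝ᵥ φ)) ≤ 2 * (β / γ) * (1 + μ * (φ ⬝ᵥ φ)) * d := by
    calc 4 * k * (d * (φ ⬝ᵥ φ)) ≤ 2 * (β / γ) * μ * (d * (φ ⬝ᵥ φ)) := by gcongr
      _ ≤ 2 * (β / γ) * d + 2 * (β / γ) * μ * (d * (φ ⬝ᵥ φ)) :=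
        le_add_of_nonneg_left (by positivity)
      _ = 2 * (β / γ) * (1 + μ * (φ ⬝ᵥ φ)) * d := by ring
  rw [hotLyapunovRate, ← d_def]
  linarith

lemma abs_hotEnergyRate_le [DecidableEq ι] [DecidableEq κ] {P Q : Matrix ι ι ℝ} (hP : P.PosDef)
    (hQ : Q.PosSemidef) (B : Matrix ι κ ℝ) {Λ : Matrix κ κ ℝ} (hΛ : Λ.PosSemidef)
    (hΛnorm : ‖toEuclideanCLM (𝕜 := ℝ) Λ‖ ≤ 1) {γ V₀ C : ℝ} (hγ : 0 < γ) {φ : ν → ℝ}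
    (hφ : φ ⬝ᵥ φ ≤ C) {e : ι → ℝ} {X D : Matrix κ ν ℝ} (hV : hotLyapunov P Λ γ e X D ≤ V₀) :
    |hotEnergyRate P Q B Λ φ e X D| ≤
      (Q.trace + 2 * ∑ i, ∑ j, (P * B) i j ^ 2) * (P⁻¹.trace * V₀) + γ * V₀ * C := by
  set k := ∑ i, ∑ j, (P * B) i j ^ 2
  set b := (Bᵀ * P) *ᵥ e with b_def
  have Q_trace_nonneg : 0 ≤ Q.trace := hQ.trace_nonneg
  have φ_nonneg : 0 ≤ φ ⬝ᵥ φ := dotProduct_star_self_nonneg φ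
  have Q_form_nonneg : 0 ≤ e ⬝ᵥ Q *ᵥ e := hQ.dotProduct_mulVec_nonneg e
  have Q_form_le : e ⬝ᵥ Q *ᵥ e ≤ Q.trace * (e ⬝ᵥ e) :=
    dotProduct_mulVec_le_trace_mul_of_posSemidef hQ e
  have b_le : b ⬝ᵥ Λ *ᵥ b ≤ k * (e ⬝ᵥ e) :=
    dotProduct_mulVec_transpose_mul_mulVec_le (isHermitian_iff_isSymm.1 hP.isHermitian) B hΛnorm e
  have e_le : e ⬝ᵥ e ≤ P⁻¹.trace * V₀ :=
    (dotProduct_self_le_trace_inv_mul_of_posDef hP e).trans (mul_le_mul_of_nonneg_left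
      ((dotProduct_mulVec_le_hotLyapunov P hΛ hγ.le e X D).trans hV)
      hP.inv.posSemidef.trace_nonneg)
  have cross_le : ∀ Y : Matrix κ ν ℝ, |2 * (b ⬝ᵥ Λ *ᵥ (Y *ᵥ φ))| ≤
      b ⬝ᵥ Λ *ᵥ b + (Yᵀ * Λ * Y).trace * (φ ⬝ᵥ φ) := fun Y => by
    rw [abs_mul, abs_two]
    exact two_mul_abs_dotProduct_mulVec_mulVec_le hΛ b Y φ
  have traces_le : ((Xᵀ * Λ * X).trace + (Dᵀ * Λ * D).trace) * (φ ⬝ᵥ φ) ≤ γ * V₀ * C :=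
    mul_le_mul ((trace_add_trace_le_mul_hotLyapunov hP.posSemidef Λ hγ e X D).trans
      (mul_le_mul_of_nonneg_left hV hγ.le)) hφ φ_nonneg
      (mul_nonneg hγ.le ((hotLyapunov_nonneg hP.posSemidef hΛ hγ.le e X D).trans hV))
  calc |hotEnergyRate P Q B Λ φ e X D|
      ≤ e ⬝ᵥ Q *ᵥ e + |2 * (b ⬝ᵥ Λ *ᵥ (X *ᵥ φ))| + |2 * (b ⬝ᵥ Λ *ᵥ (D *ᵥ φ))| := by
        rw [hotEnergyRate, ← b_def]
        refine (abs_add_three _ _ _).trans_eq ?_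
        rw [abs_neg, abs_of_nonneg Q_form_nonneg]
    _ ≤ (Q.trace + 2 * k) * (e ⬝ᵥ e)
          + ((Xᵀ * Λ * X).trace + (Dᵀ * Λ * D).trace) * (φ ⬝ᵥ φ) := by
        linarith [cross_le X, cross_le D]
    _ ≤ (Q.trace + 2 * k) * (P⁻¹.trace * V₀) + γ * V₀ * C := by gcongr

namespace IsHOTErrorSolution

variable {A P Q : Matrix ι ι ℝ} {B : Matrix ι κ ℝ} {Λ : Matrix κ κ ℝ} {γ β μ C : ℝ}
  {φ : ℝ → ν → ℝ} {e : ℝ → ι → ℝ} {X D : ℝ → Matrix κ ν ℝ}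

lemma hasDerivAt_energy (h : IsHOTErrorSolution A P B Λ γ β μ φ e X D) (hP : P.IsSymm)
    (hLyap : Aᵀ * P + P * A = -Q) {t : ℝ} (ht : t ∈ Set.Ici 0) :
    HasDerivAt (fun s => e s ⬝ᵥ P *ᵥ e s)
      (hotEnergyRate P Q B Λ (φ t) (e t) (X t) (D t)) t := by
  refine (hasDerivAt_dotProduct_mulVec_self hP (h.hasDerivAt_error t ht)).congr_deriv ?_
  have drift : 2 * (e t ⬝ᵥ P *ᵥ (A *ᵥ e t)) = -(e t ⬝ᵥ Q *ᵥ e t) := by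
    rw [← dotProduct_neg, ← neg_mulVec, ← hLyap, add_mulVec, dotProduct_add, ← mulVec_mulVec,
      ← mulVec_mulVec, dotProduct_mulVec (e t) Aᵀ, vecMul_transpose,
      dotProduct_mulVec_comm_of_isSymm hP (A *ᵥ e t), two_mul]
  have input : e t ⬝ᵥ P *ᵥ ((B * Λ * (X t + D t)) *ᵥ φ t) =
      ((Bᵀ * P) *ᵥ e t) ⬝ᵥ Λ *ᵥ (X t *ᵥ φ t) + ((Bᵀ * P) *ᵥ e t) ⬝ᵥ Λ *ᵥ (D t *ᵥ φ t) := by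
    rw [← dotProduct_add, ← mulVec_add, ← add_mulVec, dotProduct_mulVec_comm_of_isSymm hP,
      ← mulVec_mulVec, ← mulVec_mulVec, ← mulVec_mulVec, mulVec_transpose, ← dotProduct_mulVec,
      dotProduct_comm]
  rw [mulVec_add, dotProduct_add, mul_add, drift, input, hotEnergyRate]
  ring

lemma hasDerivAt_hotLyapunov (h : IsHOTErrorSolution A P B Λ γ β μ φ e X D) (hP : P.IsSymm)
    (hΛ : Λ.IsSymm) (hγ : γ ≠ 0) (hLyap : Aᵀ * P + P * A = -Q) {t : ℝ} (ht : t ∈ Set.Ici 0) :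
    HasDerivAt (fun s => hotLyapunov P Λ γ (e s) (X s) (D s))
      (hotLyapunovRate P Q B Λ γ β μ (φ t) (e t) (D t)) t := by
  have hX := hasDerivAt_trace_transpose_mul_mul hΛ (h.hasDerivAt_deviation t ht)
  have hD := hasDerivAt_trace_transpose_mul_mul hΛ (h.hasDerivAt_lag t ht)
  refine ((h.hasDerivAt_energy hP hLyap ht).add ((hX.add hD).const_mul γ⁻¹)).congr_deriv ?_
  simp only [Matrix.mul_add, Matrix.mul_smul, trace_add, trace_smul, smul_eq_mul,
    trace_transpose_mul_mul_vecMulVec hΛ, hotEnergyRate, hotLyapunovRate]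
  field_simp
  ring

lemma hotLyapunov_le_initial [DecidableEq ι] [DecidableEq κ]
    (h : IsHOTErrorSolution A P B Λ γ β μ φ e X D) (hP : P.IsSymm)
    (hLyap : Aᵀ * P + P * A = -Q) (hQ : (Q - (2 : ℝ) • 1).PosSemidef) (hΛ : Λ.PosSemidef)
    (hΛnorm : ‖toEuclideanCLM (𝕜 := ℝ) Λ‖ ≤ 1) (hγ : 0 < γ) (hβ : 0 < β)
    (hμ : 2 * γ / β * ∑ i, ∑ j, (P * B) i j ^ 2 ≤ μ) {t : ℝ} (ht : t ∈ Set.Ici 0) :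
    hotLyapunov P Λ γ (e t) (X t) (D t) ≤ hotLyapunov P Λ γ (e 0) (X 0) (D 0) := by
  have hΛsymm := isHermitian_iff_isSymm.1 hΛ.isHermitian
  exact antitoneOn_Ici_of_hasDerivAt_nonpos
    (fun s hs => h.hasDerivAt_hotLyapunov hP hΛsymm hγ.ne' hLyap hs)
    (fun s _ => (hotLyapunovRate_le hP hQ B hΛ hΛnorm hγ hβ hμ (φ s) (e s) (D s)).trans
      (neg_nonpos.2 (dotProduct_star_self_nonneg (e s))))
    Set.self_mem_Ici ht ht

lemma integrableOn_energy [DecidableEq ι] [DecidableEq κ]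
    (h : IsHOTErrorSolution A P B Λ γ β μ φ e X D) (hP : P.PosSemidef)
    (hLyap : Aᵀ * P + P * A = -Q) (hQ : (Q - (2 : ℝ) • 1).PosSemidef) (hΛ : Λ.PosSemidef)
    (hΛnorm : ‖toEuclideanCLM (𝕜 := ℝ) Λ‖ ≤ 1) (hγ : 0 < γ) (hβ : 0 < β)
    (hμ : 2 * γ / β * ∑ i, ∑ j, (P * B) i j ^ 2 ≤ μ) :
    IntegrableOn (fun t => e t ⬝ᵥ P *ᵥ e t) (Set.Ioi 0) := by
  have hPsymm := isHermitian_iff_isSymm.1 hP.isHermitian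
  have hΛsymm := isHermitian_iff_isSymm.1 hΛ.isHermitian
  have rate_le : ∀ t, hotLyapunovRate P Q B Λ γ β μ (φ t) (e t) (D t) ≤ -(e t ⬝ᵥ e t) := fun t =>
    hotLyapunovRate_le hPsymm hQ B hΛ hΛnorm hγ hβ hμ (φ t) (e t) (D t)
  have rate_integrable :
      IntegrableOn (fun t => hotLyapunovRate P Q B Λ γ β μ (φ t) (e t) (D t)) (Set.Ioi 0) :=
    integrableOn_Ioi_of_hasDerivAt_of_nonpos_of_nonneg
      (fun t ht => h.hasDerivAt_hotLyapunov hPsymm hΛsymm hγ.ne' hLyap ht)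
      (fun t _ => (rate_le t).trans (neg_nonpos.2 (dotProduct_star_self_nonneg (e t))))
      (fun t _ => hotLyapunov_nonneg hP hΛ hγ.le (e t) (X t) (D t))
  have energy_continuousOn : ContinuousOn (fun t => e t ⬝ᵥ P *ᵥ e t) (Set.Ioi 0) := fun t ht =>
    (h.hasDerivAt_energy hPsymm hLyap
      (Set.Ioi_subset_Ici_self ht)).continuousAt.continuousWithinAt
  have energy_le : ∀ t, ‖e t ⬝ᵥ P *ᵥ e t‖ ≤
      P.trace * -hotLyapunovRate P Q B Λ γ β μ (φ t) (e t) (D t) := fun t => by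
    have energy_nonneg : 0 ≤ e t ⬝ᵥ P *ᵥ e t := hP.dotProduct_mulVec_nonneg (e t)
    rw [Real.norm_of_nonneg energy_nonneg]
    exact (dotProduct_mulVec_le_trace_mul_of_posSemidef hP (e t)).trans
      (mul_le_mul_of_nonneg_left (le_neg_of_le_neg (rate_le t)) hP.trace_nonneg)
  exact (rate_integrable.neg.const_mul P.trace).mono'
    (energy_continuousOn.aestronglyMeasurable measurableSet_Ioi) (ae_of_all _ energy_le)

theorem tendsto_energy [DecidableEq ι] [DecidableEq κ]
    (h : IsHOTErrorSolution A P B Λ γ β μ φ e X D) (hP : P.PosDef)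
    (hLyap : Aᵀ * P + P * A = -Q) (hQ : (Q - (2 : ℝ) • 1).PosSemidef) (hΛ : Λ.PosSemidef)
    (hΛnorm : ‖toEuclideanCLM (𝕜 := ℝ) Λ‖ ≤ 1) (hγ : 0 < γ) (hβ : 0 < β)
    (hμ : 2 * γ / β * ∑ i, ∑ j, (P * B) i j ^ 2 ≤ μ)
    (hφ : ∀ t ∈ Set.Ici (0 : ℝ), φ t ⬝ᵥ φ t ≤ C) :
    Tendsto (fun t => e t ⬝ᵥ P *ᵥ e t) atTop (nhds 0) := by
  have hPsymm := isHermitian_iff_isSymm.1 hP.isHermitian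
  have hQpos : Q.PosSemidef := by
    simpa using hQ.add (PosSemidef.one.smul (zero_le_two (α := ℝ)))
  have lyapunov_le := fun t (ht : t ∈ Set.Ici (0 : ℝ)) =>
    h.hotLyapunov_le_initial hPsymm hLyap hQ hΛ hΛnorm hγ hβ hμ ht
  have energy_le : ∀ t ∈ Set.Ici (0 : ℝ),
      |e t ⬝ᵥ P *ᵥ e t| ≤ hotLyapunov P Λ γ (e 0) (X 0) (D 0) := fun t ht => by
    have energy_nonneg : 0 ≤ e t ⬝ᵥ P *ᵥ e t := hP.posSemidef.dotProduct_mulVec_nonneg (e t)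
    rw [abs_of_nonneg energy_nonneg]
    exact (dotProduct_mulVec_le_hotLyapunov P hΛ hγ.le (e t) (X t) (D t)).trans (lyapunov_le t ht)
  exact tendsto_zero_of_integrableOn_of_abs_deriv_le
    (fun t ht => h.hasDerivAt_energy hPsymm hLyap ht)
    (h.integrableOn_energy hP.posSemidef hLyap hQ hΛ hΛnorm hγ hβ hμ) energy_le
    (fun t ht => abs_hotEnergyRate_le hP hQpos B hΛ hΛnorm hγ (hφ t ht) (lyapunov_le t ht))

end IsHOTErrorSolution

lemma tendsto_zero_of_tendsto_dotProduct_mulVec_self {P : Matrix ι ι ℝ} (hP : P.PosDef)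
    {α : Type*} {l : Filter α} {x : α → ι → ℝ}
    (hx : Tendsto (fun a => x a ⬝ᵥ P *ᵥ x a) l (nhds 0)) : Tendsto x l (nhds 0) := by
  classical
  refine tendsto_pi_nhds.2 fun i => squeeze_zero_norm (fun a => ?_)
    (by simpa using (hx.const_mul P⁻¹.trace).sqrt)
  refine Real.abs_le_sqrt ?_
  calc x a i ^ 2 ≤ ∑ j, x a j ^ 2 :=
        Finset.single_le_sum (fun j _ => sq_nonneg (x a j)) (Finset.mem_univ i)
    _ = x a ⬝ᵥ x a := by simp only [dotProduct, sq]
    _ ≤ P⁻¹.trace * (x a ⬝ᵥ P *ᵥ x a) := dotProduct_self_le_trace_inv_mul_of_posDef hP (x a)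

lemma isHOTErrorSolution_sub {A P : Matrix ι ι ℝ} {B : Matrix ι κ ℝ} {Λ : Matrix κ κ ℝ}
    {Θ : Matrix κ ν ℝ} {γ β μ : ℝ} {Φ : ℝ → ν → ℝ} {e : ℝ → ι → ℝ} {Θh Ξ : ℝ → Matrix κ ν ℝ}
    (he : ∀ t ∈ Set.Ici (0 : ℝ),
      HasDerivAt e (A *ᵥ e t + (B * Λ * (Θh t - Θ)) *ᵥ Φ t) t)
    (hΞ : ∀ t ∈ Set.Ici (0 : ℝ), ∀ i j,
      HasDerivAt (fun s => Ξ s i j) (-γ * (((Bᵀ * P) *ᵥ e t) i * Φ t j)) t)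
    (hΘh : ∀ t ∈ Set.Ici (0 : ℝ), ∀ i j,
      HasDerivAt (fun s => Θh s i j)
        (-β * (Θh t i j - Ξ t i j) * (1 + μ * (Φ t ⬝ᵥ Φ t))) t) :
    IsHOTErrorSolution A P B Λ γ β μ Φ e (fun t => Ξ t - Θ) (fun t => Θh t - Ξ t) where
  hasDerivAt_error t ht := (he t ht).congr_deriv (by rw [add_comm (Ξ t - Θ), sub_add_sub_cancel])
  hasDerivAt_deviation t ht i j := (hΞ t ht i j).sub_const (Θ i j)
  hasDerivAt_lag t ht i j := ((hΘh t ht i j).sub (hΞ t ht i j)).congr_deriv (by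
    simp only [Matrix.add_apply, Matrix.smul_apply, Matrix.sub_apply, vecMulVec_apply, smul_eq_mul]
    ring)

theorem hot_error_convergence_general [DecidableEq ι] [DecidableEq κ]
    (A : Matrix ι ι ℝ) (B : Matrix ι κ ℝ) (Q P : Matrix ι ι ℝ) (hP : P.PosDef)
    (hLyap : Aᵀ * P + P * A = -Q) (hQ : (Q - (2 : ℝ) • 1).PosSemidef)
    (Λ : Matrix κ κ ℝ) (hΛ : Λ.PosSemidef) (hΛnorm : ‖toEuclideanCLM (𝕜 := ℝ) Λ‖ ≤ 1)
    (Θ : Matrix κ ν ℝ) (γ β μ : ℝ) (hγ : 0 < γ) (hβ : 0 < β)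
    (hμ : 2 * γ / β * ∑ i, ∑ j, (P * B) i j ^ 2 ≤ μ)
    (Φ : ℝ → ν → ℝ) (hΦ : ∃ C, ∀ t ∈ Set.Ici (0 : ℝ), Real.sqrt (∑ j, Φ t j ^ 2) ≤ C)
    (e : ℝ → ι → ℝ) (Θh Ξ : ℝ → Matrix κ ν ℝ)
    (he : ∀ t ∈ Set.Ici (0 : ℝ),
      HasDerivAt e (A *ᵥ e t + (B * Λ * (Θh t - Θ)) *ᵥ Φ t) t)
    (hΞ : ∀ t ∈ Set.Ici (0 : ℝ), ∀ i j,
      HasDerivAt (fun s => Ξ s i j) (-γ * (((Bᵀ * P) *ᵥ e t) i * Φ t j)) t)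
    (hΘh : ∀ t ∈ Set.Ici (0 : ℝ), ∀ i j,
      HasDerivAt (fun s => Θh s i j)
        (-β * (Θh t i j - Ξ t i j) * (1 + μ * (Φ t ⬝ᵥ Φ t))) t) :
    Tendsto e atTop (nhds 0) := by
  obtain ⟨C, hC⟩ := hΦ
  have hΦsq : ∀ t ∈ Set.Ici (0 : ℝ), Φ t ⬝ᵥ Φ t ≤ C ^ 2 := fun t ht => by
    simpa only [dotProduct, sq] using Real.sqrt_le_iff.1 (hC t ht) |>.2
  exact tendsto_zero_of_tendsto_dotProduct_mulVec_self hP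
    ((isHOTErrorSolution_sub he hΞ hΘh).tendsto_energy hP hLyap hQ hΛ hΛnorm hγ hβ hμ hΦsq)

end HighOrderTuner

/-- Theorem 4, convergence. If in addition the regressor `Φ` is
bounded on `[0,∞)`, then along any solution of the high-order-tuner error model the
tracking error converges to zero: `lim_{t→∞} e(t) = 0`. -/
theorem hot_error_convergence
    (n m N : ℕ)
    (AH : Matrix (Fin n) (Fin n) ℝ) (B : Matrix (Fin n) (Fin m) ℝ)
    (Q P : Matrix (Fin n) (Fin n) ℝ)
    (hQ : Q.PosDef) (hP : P.PosDef)
    (hLyap : AHᵀ * P + P * AH = -Q)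
    (hQ2 : (Q - (2 : ℝ) • 1).PosSemidef)
    (Λ : Matrix (Fin m) (Fin m) ℝ) (hΛ : Λ.PosDef)
    (hΛnorm : ‖Matrix.toEuclideanCLM (𝕜 := ℝ) Λ‖ ≤ 1)
    (Θ : Matrix (Fin m) (Fin N) ℝ)
    (γ β μ : ℝ) (hγ : 0 < γ) (hβ : 0 < β)
    (hμ : (2 * γ / β) * ∑ i, ∑ j, ((P * B) i j) ^ 2 ≤ μ)
    (Φ : ℝ → Fin N → ℝ) (hΦ : ContinuousOn Φ (Set.Ici 0))
    (hΦbdd : ∃ C, ∀ t ∈ Set.Ici (0 : ℝ), Real.sqrt (∑ j, Φ t j ^ 2) ≤ C)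
    (e : ℝ → Fin n → ℝ) (Θh Ξ : ℝ → Matrix (Fin m) (Fin N) ℝ)
    (he : ∀ t ∈ Set.Ici (0 : ℝ),
      HasDerivAt e (AH.mulVec (e t) + (B * Λ * (Θh t - Θ)).mulVec (Φ t)) t)
    (hΞ : ∀ t ∈ Set.Ici (0 : ℝ), ∀ i j,
      HasDerivAt (fun s => Ξ s i j) (-γ * ((Bᵀ * P).mulVec (e t) i * Φ t j)) t)
    (hΘh : ∀ t ∈ Set.Ici (0 : ℝ), ∀ i j,
      HasDerivAt (fun s => Θh s i j)
        (-β * (Θh t i j - Ξ t i j) * (1 + μ * (Φ t ⬝ᵥ Φ t))) t) :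
    Tendsto e atTop (nhds 0) :=
  hot_error_convergence_general AH B Q P hP hLyap hQ2 Λ hΛ.posSemidef hΛnorm Θ γ β μ hγ hβ hμ
    Φ hΦbdd e Θh Ξ he hΞ hΘh
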